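/- arXiv:2101.12577 — 2 statements merged into one kernel-verified Lean document; each statement's English description precedes it below -/
import Mathlib

section
/- For every d ≥ 1, there exists a 2d-regular vertex-transitive simple graph G with countable vertex set (i.e. Aut(G) acts transitively on V(G)) that admits no Aut(G)-factor of iid balanced orientation; in particular, G admits no Aut(G)-factor of iid Schreier decoration. -/
/-!
Fix a set `S` of `d` positive integers whose sum is odd, for instance `{1, 2, 4, …, 2(d-1)}`, and
let `G` be the Cayley graph of `ℤ` with connection set `S ∪ -S`. It is `2d`-regular, and
translations act transitively. Cutting `ℤ` between `n` and `n + 1` severs exactly `∑ s ∈ S, s`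
edges, an odd number, so the net flow of an orientation across a cut is never zero. For a balanced
orientation this net flow does not depend on `n`, because moving the cut past a vertex changes it
by outdegree minus indegree. Thus a balanced orientation of `G` has a well-defined direction, left
or right, and every reflection `v ↦ N - v`, which is an automorphism of `G`, reverses it.

For a factor of iid balanced orientation, let `A` be the event that the direction is right. For
every `N`, the reflection of configurations about `N / 2` preserves the measure `μ` and exchanges
`A` with its complement up to a null set, whence `μ A = 1/2`. On the other hand `A` is
approximated by an event `B` depending on finitely many coordinates, and for suitable `N` the
reflected event `B'` depends on a disjoint set of coordinates, so `μ (B ∩ B') = μ B ^ 2`. The left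
side is close to `μ (A ∩ Aᶜ) = 0` and the right side to `1/4`, a contradiction
(`IsIIDUniform.not_reflection_alternating`).

Forgetting the colours turns a Schreier decoration into a balanced orientation
(`IsSchreierDecoration.isBalancedOrientation`), which reduces the second claim to the first.
-/

open MeasureTheory

/-- A balanced orientation of `G`, encoded as `F : V → V → Bool` where `F u v = true` means
the edge `{u, v}` is oriented from `u` to `v`: each edge gets exactly one direction, and
every vertex has indegree equal to outdegree.  Values on non-adjacent pairs are
irrelevant. -/
def IsBalancedOrientation {V : Type*} (G : SimpleGraph V) (F : V → V → Bool) : Prop :=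
  (∀ u v, G.Adj u v → F u v = !F v u) ∧
  (∀ v, {u | G.Adj v u ∧ F v u = true}.ncard = {u | G.Adj v u ∧ F u v = true}.ncard)
/-- A Schreier decoration of a `2d`-regular graph `G`: a map on ordered pairs of adjacent
vertices with values in `Fin d × Bool` (`true` = out, `false` = in), with
`D u v = (i, out) ↔ D v u = (i, in)`, such that every vertex has, for each colour `i`,
exactly one outgoing and exactly one incoming edge of colour `i`.  Values of `D` on
non-adjacent pairs are irrelevant. -/
def IsSchreierDecoration {V : Type*} (G : SimpleGraph V) (d : ℕ)
    (D : V → V → Fin d × Bool) : Prop :=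
  (∀ u v, G.Adj u v → ∀ i : Fin d, (D u v = (i, true) ↔ D v u = (i, false))) ∧
  (∀ v, ∀ i : Fin d, ∃! u, G.Adj v u ∧ D v u = (i, true)) ∧
  (∀ v, ∀ i : Fin d, ∃! u, G.Adj v u ∧ D v u = (i, false))

/-- There is no infinite monochromatic path: no injective sequence of vertices, consecutive
ones adjacent, all edges of the same colour. -/
def HasNoInfiniteMonochromaticPath {V : Type*} (G : SimpleGraph V) {d : ℕ}
    (D : V → V → Fin d × Bool) : Prop :=
  ¬ ∃ p : ℕ → V, Function.Injective p ∧ (∀ n, G.Adj (p n) (p (n+1))) ∧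
      (∀ n, (D (p n) (p (n+1))).1 = (D (p 0) (p 1)).1)
/-- `μ` is the product over `V` of iid uniform measures on `[0,1]`: it is a probability
measure on `[0,1]^V ⊆ ℝ^V` whose finite-dimensional marginals are products of the
Lebesgue measure restricted to `[0,1]`. -/
def IsIIDUniform {V : Type*} (μ : MeasureTheory.Measure (V → ℝ)) : Prop :=
  MeasureTheory.IsProbabilityMeasure μ ∧
  ∀ (s : Finset V) (B : V → Set ℝ), (∀ v, MeasurableSet (B v)) →
    μ {ω | ∀ v ∈ s, ω v ∈ B v} =
      ∏ v ∈ s, MeasureTheory.volume (B v ∩ Set.Icc (0:ℝ) 1)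

/-! ### Circulant graphs on the integers and the flow across a cut -/

/-- The Cayley graph of `ℤ` with connection set `S ∪ -S`. The condition `a ≠ b` removes the loops
that `0 ∈ S` would create. -/
def circulant (S : Finset ℕ) : SimpleGraph ℤ where
  Adj a b := a ≠ b ∧ (a - b).natAbs ∈ S
  symm := ⟨fun a b h => ⟨h.1.symm, by rw [← Int.natAbs_neg, neg_sub]; exact h.2⟩⟩
  loopless := ⟨fun _ h => h.1 rfl⟩

/-- The reflection `v ↦ N - v` of `ℤ`, as an automorphism of a circulant graph. -/
def circulantReflect (S : Finset ℕ) (N : ℤ) : circulant S ≃g circulant S where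
  toEquiv := Equiv.subLeft N
  map_rel_iff' := by
    intro a b
    have h : (b - a).natAbs = (a - b).natAbs := by
      rw [← Int.natAbs_neg, neg_sub]
    simp [circulant, h]

/-- The neighbours of `n` in `circulant S`, provided `0 ∉ S`. -/
def circulantNbrs (S : Finset ℕ) (n : ℤ) : Finset ℤ :=
  S.image (fun s : ℕ => n + (s : ℤ)) ∪ S.image (fun s : ℕ => n - (s : ℤ))

lemma circulant_adj_iff {S : Finset ℕ} (hS : 0 ∉ S) (n u : ℤ) :
    (circulant S).Adj n u ↔ u ∈ circulantNbrs S n := by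
  simp only [circulant, circulantNbrs, Finset.mem_union, Finset.mem_image]
  constructor
  · rintro ⟨-, h⟩
    rcases le_total n u with h' | h'
    · exact Or.inl ⟨_, h, by omega⟩
    · exact Or.inr ⟨_, h, by omega⟩
  · rintro (⟨s, hs, rfl⟩ | ⟨s, hs, rfl⟩)
    all_goals
      have h0 : s ≠ 0 := fun h => hS (h ▸ hs)
      refine ⟨by omega, ?_⟩
    · rwa [show (n - (n + (s : ℤ))).natAbs = s by omega]
    · rwa [show (n - (n - (s : ℤ))).natAbs = s by omega]

lemma disjoint_circulantNbrs {S : Finset ℕ} (hS : 0 ∉ S) (n : ℤ) :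
    Disjoint (S.image (fun s : ℕ => n + (s : ℤ))) (S.image (fun s : ℕ => n - (s : ℤ))) := by
  rw [Finset.disjoint_left]
  intro a ha hb
  obtain ⟨s, hs, rfl⟩ := Finset.mem_image.1 ha
  obtain ⟨t, ht, h⟩ := Finset.mem_image.1 hb
  have h0 : s ≠ 0 := fun h => hS (h ▸ hs)
  omega

lemma card_circulantNbrs {S : Finset ℕ} (hS : 0 ∉ S) (n : ℤ) :
    (circulantNbrs S n).card = 2 * S.card := by
  rw [circulantNbrs, Finset.card_union_of_disjoint (disjoint_circulantNbrs hS n),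
    Finset.card_image_of_injective _ (fun a b h => by simpa using h),
    Finset.card_image_of_injective _ (fun a b h => by simpa using h)]
  ring

lemma sum_circulantNbrs {S : Finset ℕ} (hS : 0 ∉ S) (n : ℤ) (f : ℤ → ℤ) :
    ∑ u ∈ circulantNbrs S n, f u = ∑ s ∈ S, (f (n + s) + f (n - s)) := by
  rw [circulantNbrs, Finset.sum_union (disjoint_circulantNbrs hS n),
    Finset.sum_image (fun a _ b _ h => by simpa using h),
    Finset.sum_image (fun a _ b _ h => by simpa using h), Finset.sum_add_distrib]

/-- The flow of the orientation `F` along the edge from `a` to `b`: `1` if the edge is oriented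
from `a` to `b`, and `-1` otherwise. -/
def edgeFlow (F : ℤ → ℤ → Bool) (a b : ℤ) : ℤ := if F a b = true then 1 else -1

/-- The net flow of the orientation `F` of `circulant S` from `(-∞, n]` to `[n + 1, ∞)`. The edges
of length `s` across this cut are those from `n - j` to `n - j + s` with `0 ≤ j < s`. -/
def cutFlow (S : Finset ℕ) (F : ℤ → ℤ → Bool) (n : ℤ) : ℤ :=
  ∑ s ∈ S, ∑ j ∈ Finset.range s, edgeFlow F (n - j) (n - j + s)

lemma edgeFlow_neg {S : Finset ℕ} {F : ℤ → ℤ → Bool}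
    (hF : IsBalancedOrientation (circulant S) F) {a b : ℤ} (h : (circulant S).Adj a b) :
    edgeFlow F a b = - edgeFlow F b a := by
  have := hF.1 a b h
  unfold edgeFlow
  cases hb : F b a <;> simp [this, hb]

/-- The net flow out of a vertex vanishes. -/
lemma sum_edgeFlow_eq_zero {S : Finset ℕ} (hS : 0 ∉ S) {F : ℤ → ℤ → Bool}
    (hF : IsBalancedOrientation (circulant S) F) (n : ℤ) :
    ∑ u ∈ circulantNbrs S n, edgeFlow F n u = 0 := by
  have h := hF.2 n
  have h1 : {u | (circulant S).Adj n u ∧ F n u = true}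
      = ((circulantNbrs S n).filter (fun u => F n u = true) : Finset ℤ) := by
    ext u; simp [circulant_adj_iff hS]
  have h2 : {u | (circulant S).Adj n u ∧ F u n = true}
      = ((circulantNbrs S n).filter (fun u => ¬ F n u = true) : Finset ℤ) := by
    ext u
    simp only [Set.mem_ofPred_eq, Finset.coe_filter, ← circulant_adj_iff hS]
    refine and_congr_right fun ha => ?_
    rw [hF.1 n u ha]
    simp
  rw [h1, h2, Set.ncard_coe_finset, Set.ncard_coe_finset] at h
  simp only [edgeFlow, Finset.sum_ite, Finset.sum_const, nsmul_eq_mul]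
  rw [h]
  ring

lemma cutFlow_sub_one {S : Finset ℕ} (hS : 0 ∉ S) {F : ℤ → ℤ → Bool}
    (hF : IsBalancedOrientation (circulant S) F) (n : ℤ) :
    cutFlow S F (n - 1) = cutFlow S F n := by
  have key : cutFlow S F n - cutFlow S F (n - 1) = ∑ u ∈ circulantNbrs S n, edgeFlow F n u := by
    rw [sum_circulantNbrs hS, cutFlow, cutFlow, ← Finset.sum_sub_distrib]
    refine Finset.sum_congr rfl fun s hs => ?_
    have ha : (circulant S).Adj n (n - s) := by
      rw [circulant_adj_iff hS, circulantNbrs, Finset.mem_union]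
      exact Or.inr (Finset.mem_image_of_mem _ hs)
    rw [edgeFlow_neg hF ha, ← Finset.sum_sub_distrib]
    have := Finset.sum_range_sub' (fun j : ℕ => edgeFlow F (n - j) (n - j + s)) s
    simp only [Nat.cast_zero, sub_zero, sub_add_cancel, Nat.cast_add, Nat.cast_one] at this
    rw [← sub_eq_add_neg, ← this]
    refine Finset.sum_congr rfl fun j _ => ?_
    rw [show n - 1 - (j : ℤ) = n - ((j : ℤ) + 1) by ring]
  rw [sum_edgeFlow_eq_zero hS hF] at key
  omega

lemma cutFlow_eq_zero_cut {S : Finset ℕ} (hS : 0 ∉ S) {F : ℤ → ℤ → Bool}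
    (hF : IsBalancedOrientation (circulant S) F) (n : ℤ) :
    cutFlow S F n = cutFlow S F 0 := by
  induction n using Int.induction_on with
  | zero => rfl
  | succ i ih => rw [← ih, ← cutFlow_sub_one hS hF, add_sub_cancel_right]
  | pred i ih => rw [cutFlow_sub_one hS hF, ih]

/-- The flow across a cut is a sum of `∑ s ∈ S, s` terms `±1`. -/
lemma odd_cutFlow {S : Finset ℕ} (hodd : Odd (∑ s ∈ S, s)) (F : ℤ → ℤ → Bool) (n : ℤ) :
    Odd (cutFlow S F n) := by
  have h1 : ∀ a b, ((edgeFlow F a b : ℤ) : ZMod 2) = 1 := by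
    intro a b
    unfold edgeFlow
    split_ifs
    · simp
    · decide
  rw [← Int.not_even_iff_odd, ← ZMod.intCast_eq_zero_iff_even]
  have h2 : ((cutFlow S F n : ℤ) : ZMod 2) = ((∑ s ∈ S, s : ℕ) : ZMod 2) := by
    simp [cutFlow, h1]
  rw [h2, ZMod.natCast_eq_zero_iff_even, Nat.not_even_iff_odd]
  exact hodd

lemma cutFlow_reflect {S : Finset ℕ} (hS : 0 ∉ S) {F : ℤ → ℤ → Bool}
    (hF : IsBalancedOrientation (circulant S) F) (N : ℤ) :
    cutFlow S (fun u v => F (N - u) (N - v)) 0 = - cutFlow S F 0 := by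
  rw [← cutFlow_eq_zero_cut hS hF (N - 1), cutFlow, cutFlow, ← Finset.sum_neg_distrib]
  refine Finset.sum_congr rfl fun s hs => ?_
  rw [← Finset.sum_neg_distrib, ← Finset.sum_range_reflect]
  refine Finset.sum_congr rfl fun j hj => ?_
  have hj := Finset.mem_range.1 hj
  have hc : ((s - 1 - j : ℕ) : ℤ) = s - 1 - j := by omega
  have ha : (circulant S).Adj (N - 1 - j) (N - 1 - j + s) := by
    rw [circulant_adj_iff hS, circulantNbrs, Finset.mem_union]
    exact Or.inl (Finset.mem_image_of_mem _ hs)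
  rw [edgeFlow_neg hF ha, neg_neg, hc]
  change edgeFlow F (N - (0 - ((s : ℤ) - 1 - j))) (N - (0 - ((s : ℤ) - 1 - j) + s)) = _
  congr 1 <;> ring

/-! ### Reflections of an iid configuration -/

lemma IsIIDUniform.eq_infinitePi {μ : Measure (ℤ → ℝ)} (hμ : IsIIDUniform μ) :
    μ = Measure.infinitePi (fun _ : ℤ => volume.restrict (Set.Icc (0 : ℝ) 1)) := by
  have : IsProbabilityMeasure (volume.restrict (Set.Icc (0 : ℝ) 1)) := ⟨by simp⟩
  refine Measure.eq_infinitePi _ fun s t ht => ?_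
  have h := hμ.2 s t ht
  simp only [Measure.restrict_apply (ht _)]
  rw [← h]
  rfl

lemma measurable_reflect (N : ℤ) : Measurable (fun (ω : ℤ → ℝ) (v : ℤ) => ω (N - v)) :=
  measurable_pi_lambda _ fun _ => measurable_pi_apply _

lemma IsIIDUniform.map_reflect {μ : Measure (ℤ → ℝ)} (hμ : IsIIDUniform μ) (N : ℤ) :
    μ.map (fun ω v => ω (N - v)) = μ := by
  have := hμ.1
  have h : IsIIDUniform (μ.map (fun (ω : ℤ → ℝ) v => ω (N - v))) := by
    refine ⟨Measure.isProbabilityMeasure_map (measurable_reflect N).aemeasurable, ?_⟩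
    intro s B hB
    have hm : MeasurableSet {ω : ℤ → ℝ | ∀ v ∈ s, ω v ∈ B v} :=
      MeasurableSet.pi s.countable_toSet fun v _ => hB v
    rw [Measure.map_apply (measurable_reflect N) hm]
    have h2 := hμ.2 (s.image (N - ·)) (fun v => B (N - v)) (fun v => hB _)
    rw [Finset.prod_image (fun a _ b _ h => by simpa using h)] at h2
    simpa using h2
  rw [h.eq_infinitePi, ← hμ.eq_infinitePi]

/-- The coordinates of an iid configuration in disjoint finite sets are independent. -/
lemma IsIIDUniform.indepFun_restrict {μ : Measure (ℤ → ℝ)} (hμ : IsIIDUniform μ)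
    {s t : Finset ℤ} (hst : Disjoint s t) :
    ProbabilityTheory.IndepFun (fun (ω : ℤ → ℝ) (i : s) => ω i)
      (fun (ω : ℤ → ℝ) (i : t) => ω i) μ := by
  have : IsProbabilityMeasure (volume.restrict (Set.Icc (0 : ℝ) 1)) := ⟨by simp⟩
  rw [hμ.eq_infinitePi]
  exact (ProbabilityTheory.iIndepFun_infinitePi (X := fun (_ : ℤ) (x : ℝ) => x)
    (fun _ => measurable_id)).indepFun_finset s t hst (fun i => measurable_pi_apply i)

/-- Far reflections are mixing: a cylinder event is independent of some reflection of itself. -/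
lemma IsIIDUniform.exists_reflect_cylinder {μ : Measure (ℤ → ℝ)} (hμ : IsIIDUniform μ)
    {B : Set (ℤ → ℝ)} (hB : B ∈ measurableCylinders (fun _ : ℤ => ℝ)) :
    ∃ N : ℤ, μ (B ∩ (fun ω v => ω (N - v)) ⁻¹' B) = μ B * μ B := by
  obtain ⟨s, T, hT, rfl⟩ := (mem_measurableCylinders _).1 hB
  -- This `N` exceeds every sum of two elements of `s`.
  refine ⟨2 * (∑ v ∈ s, |v|) + 1, ?_⟩
  set N : ℤ := 2 * (∑ v ∈ s, |v|) + 1 with hN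
  have hle : ∀ v ∈ s, v ≤ ∑ v ∈ s, |v| := fun v hv =>
    (le_abs_self v).trans (Finset.single_le_sum (f := fun v : ℤ => |v|)
      (fun _ _ => abs_nonneg _) hv)
  have hdisj : Disjoint s (s.image (N - ·)) := by
    rw [Finset.disjoint_left]
    intro a ha hb
    obtain ⟨b, hb, h⟩ := Finset.mem_image.1 hb
    have h1 := hle a ha
    have h2 := hle b hb
    omega
  let φ : (s.image (N - ·) → ℝ) → (s → ℝ) :=
    fun x i => x ⟨N - i, Finset.mem_image_of_mem (N - ·) i.2⟩
  have hφ : Measurable φ := measurable_pi_lambda _ fun _ => measurable_pi_apply _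
  have h := (hμ.indepFun_restrict hdisj).measure_inter_preimage_eq_mul _ _ hT (hφ hT)
  have hpre : (fun (ω : ℤ → ℝ) (i : (s.image (N - ·) : Finset ℤ)) => ω i) ⁻¹' (φ ⁻¹' T)
      = (fun (ω : ℤ → ℝ) v => ω (N - v)) ⁻¹' (cylinder s T) := rfl
  have hpre' : (fun (ω : ℤ → ℝ) (i : s) => ω i) ⁻¹' T = cylinder s T := rfl
  rw [hpre, hpre', ← Measure.map_apply (measurable_reflect N) hT.cylinder,
    hμ.map_reflect] at h
  exact h

/-- No event is exchanged with its complement by every reflection of the line. -/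
lemma IsIIDUniform.not_reflection_alternating {μ : Measure (ℤ → ℝ)} (hμ : IsIIDUniform μ)
    {A : Set (ℤ → ℝ)} (hA : MeasurableSet A)
    (h : ∀ N : ℤ, ∀ᵐ ω ∂μ, ((fun v => ω (N - v)) ∈ A ↔ ω ∉ A)) : False := by
  have := hμ.1
  obtain ⟨B, hBC, hBA⟩ := exists_measure_symmDiff_lt_of_generateFrom_isSetRing (μ := μ)
    isSetRing_measurableCylinders
    ⟨{Set.univ}, Set.countable_singleton _, by
        simpa using univ_mem_measurableCylinders (fun _ : ℤ => ℝ),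
      by simp⟩ generateFrom_measurableCylinders.symm hA
    (ε := ENNReal.ofReal (1 / 20)) (by simp)
  have hB : MeasurableSet B := MeasurableSet.of_mem_measurableCylinders hBC
  obtain ⟨N, hN⟩ := hμ.exists_reflect_cylinder hBC
  set τ : (ℤ → ℝ) → (ℤ → ℝ) := fun ω v => ω (N - v) with hτ
  have hmp : MeasurePreserving τ μ μ := ⟨measurable_reflect N, hμ.map_reflect N⟩
  have hAc : (τ ⁻¹' A : Set (ℤ → ℝ)) =ᵐ[μ] (Aᶜ : Set (ℤ → ℝ)) := by
    filter_upwards [h N] with ω hω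
    exact propext hω
  have hhalf : μ.real A = 1 / 2 := by
    have h1 : μ.real (τ ⁻¹' A) = μ.real A := by
      simp only [Measure.real, hmp.measure_preimage hA.nullMeasurableSet]
    rw [measureReal_congr hAc, probReal_compl_eq_one_sub hA] at h1
    linarith
  have hd : μ.real (symmDiff B A) < 1 / 20 := by
    rw [Measure.real]
    exact (ENNReal.toReal_lt_of_lt_ofReal hBA)
  have habs := abs_measureReal_sub_le_measureReal_symmDiff (μ := μ)
    hB.nullMeasurableSet hA.nullMeasurableSet
  have hd' : μ.real (τ ⁻¹' (symmDiff B A)) = μ.real (symmDiff B A) := by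
    simp only [Measure.real, hmp.measure_preimage (hB.symmDiff hA).nullMeasurableSet]
  have hNr : μ.real (B ∩ τ ⁻¹' B) = μ.real B * μ.real B := by
    simp only [Measure.real, hN, ENNReal.toReal_mul]
  have h0 : μ.real (A ∩ τ ⁻¹' A) = 0 := by
    rw [measureReal_congr (Filter.EventuallyEq.rfl.inter hAc)]
    simp
  have hsub : B ∩ τ ⁻¹' B ⊆ (A ∩ τ ⁻¹' A) ∪ (symmDiff B A ∪ τ ⁻¹' (symmDiff B A)) := by
    intro ω hω
    simp only [Set.mem_inter_iff, Set.mem_preimage, Set.mem_union, Set.mem_symmDiff] at hω ⊢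
    tauto
  have h1 := measureReal_mono (μ := μ) hsub
  have h2 := measureReal_union_le (μ := μ) (A ∩ τ ⁻¹' A) (symmDiff B A ∪ τ ⁻¹' (symmDiff B A))
  have h3 := measureReal_union_le (μ := μ) (symmDiff B A) (τ ⁻¹' (symmDiff B A))
  rw [abs_le] at habs
  nlinarith

/-! ### Factors of iid on circulant graphs -/

lemma measurable_cutFlow (S : Finset ℕ) (n : ℤ) : Measurable (fun F => cutFlow S F n) := by
  have h : ∀ a b, Measurable (fun F : ℤ → ℤ → Bool => edgeFlow F a b) := fun a b =>
    (measurable_from_top (f := fun x : Bool => if x = true then (1 : ℤ) else -1)).comp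
      ((measurable_pi_apply b).comp (measurable_pi_apply a))
  exact Finset.measurable_sum _ fun s _ => Finset.measurable_sum _ fun j _ => h _ _

lemma no_fiid_balancedOrientation_circulant {S : Finset ℕ} (hS : 0 ∉ S)
    (hodd : Odd (∑ s ∈ S, s)) {μ : Measure (ℤ → ℝ)} (hμ : IsIIDUniform μ)
    {Φ : (ℤ → ℝ) → (ℤ → ℤ → Bool)} (hΦ : Measurable Φ)
    (heq : ∀ γ : circulant S ≃g circulant S, ∀ᵐ ω ∂μ,
      Φ (fun v => ω (γ.symm v)) = fun u v => Φ ω (γ.symm u) (γ.symm v))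
    (hbal : ∀ᵐ ω ∂μ, IsBalancedOrientation (circulant S) (Φ ω)) : False := by
  have hA : MeasurableSet {ω | 0 < cutFlow S (Φ ω) 0} :=
    ((measurable_cutFlow S 0).comp hΦ) measurableSet_Ioi
  refine hμ.not_reflection_alternating hA fun N => ?_
  filter_upwards [heq (circulantReflect S N), hbal] with ω h1 h2
  have hsymm : ∀ v, (circulantReflect S N).symm v = N - v := by
    intro v
    rw [RelIso.symm_apply_eq]
    exact (sub_sub_cancel N v).symm
  simp only [hsymm] at h1
  obtain ⟨k, hk⟩ := odd_cutFlow hodd (Φ ω) 0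
  change 0 < cutFlow S (Φ fun v => ω (N - v)) 0 ↔ ¬ 0 < cutFlow S (Φ ω) 0
  rw [h1, cutFlow_reflect hS h2]
  omega

/-- The orientation underlying a Schreier decoration is balanced: at every vertex the colours
identify both the outgoing and the incoming edges with `Fin d`. -/
lemma IsSchreierDecoration.isBalancedOrientation {V : Type*} {G : SimpleGraph V} {d : ℕ}
    {D : V → V → Fin d × Bool} (hD : IsSchreierDecoration G d D) :
    IsBalancedOrientation G (fun u v => (D u v).2) := by
  obtain ⟨h1, h2, h3⟩ := hD
  have hflip : ∀ u v, G.Adj u v → (D u v).2 = !(D v u).2 := by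
    intro u v h
    rcases hb : D u v with ⟨i, _ | _⟩
    · rw [(h1 v u h.symm i).2 hb]; rfl
    · rw [(h1 u v h i).1 hb]; rfl
  refine ⟨hflip, fun v => ?_⟩
  have key : ∀ b : Bool, (∀ i : Fin d, ∃! u, G.Adj v u ∧ D v u = (i, b)) →
      {u | G.Adj v u ∧ (D v u).2 = b}.ncard = d := by
    intro b hb
    have hbij : Set.BijOn (fun u => (D v u).1) {u | G.Adj v u ∧ (D v u).2 = b} Set.univ := by
      refine ⟨fun _ _ => Set.mem_univ _, ?_, ?_⟩
      · intro u hu w hw huw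
        exact (hb (D v u).1).unique ⟨hu.1, Prod.ext rfl hu.2⟩ ⟨hw.1, Prod.ext huw.symm hw.2⟩
      · intro i _
        obtain ⟨u, hu, -⟩ := hb i
        exact ⟨u, ⟨hu.1, by rw [hu.2]⟩, by simp [hu.2]⟩
    rw [← hbij.injOn.ncard_image, hbij.image_eq, Set.ncard_univ, Nat.card_fin]
  have hin : {u | G.Adj v u ∧ (D u v).2 = true} = {u | G.Adj v u ∧ (D v u).2 = false} := by
    ext u
    refine and_congr_right fun h => ?_
    rw [hflip u v h.symm]
    simp
  rw [key true (h2 v), hin, key false (h3 v)]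

lemma exists_finset_card_odd_sum (d : ℕ) (hd : 1 ≤ d) :
    ∃ S : Finset ℕ, 0 ∉ S ∧ S.card = d ∧ Odd (∑ s ∈ S, s) := by
  have h1 : 1 ∉ (Finset.Ico 1 d).image (2 * ·) := by
    intro h
    obtain ⟨a, -, ha⟩ := Finset.mem_image.1 h
    omega
  have hinj : Function.Injective (2 * · : ℕ → ℕ) := fun a b h => by simpa using h
  refine ⟨insert 1 ((Finset.Ico 1 d).image (2 * ·)), ?_, ?_, ?_⟩
  · simp
  · rw [Finset.card_insert_of_notMem h1, Finset.card_image_of_injective _ hinj, Nat.card_Ico]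
    omega
  · rw [Finset.sum_insert h1, Finset.sum_image (fun a _ b _ h => hinj h), ← Finset.mul_sum]
    exact ⟨_, add_comm _ _⟩

/-- For every `d ≥ 1` there is a `2d`-regular vertex-transitive simple graph
with countable vertex set admitting no `Aut`-factor of iid balanced orientation; in
particular, no `Aut`-factor of iid Schreier decoration. -/
theorem exists_transitive_graph_no_fiid_balanced_orientation (d : ℕ) (hd : 1 ≤ d) :
    ∃ (V : Type) (G : SimpleGraph V), Countable V ∧
      (∀ v : V, (G.neighborSet v).ncard = 2 * d) ∧
      (∀ u v : V, ∃ γ : G ≃g G, γ u = v) ∧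
      ∀ μ : Measure (V → ℝ), IsIIDUniform μ →
        (¬ ∃ Φ : (V → ℝ) → (V → V → Bool),
          Measurable Φ ∧
          (∀ γ : G ≃g G, ∀ᵐ ω ∂μ,
            Φ (fun v => ω (γ.symm v)) = fun u v => Φ ω (γ.symm u) (γ.symm v)) ∧
          (∀ᵐ ω ∂μ, IsBalancedOrientation G (Φ ω))) ∧
        (¬ ∃ Φ : (V → ℝ) → (V → V → Fin d × Bool),
          Measurable Φ ∧
          (∀ γ : G ≃g G, ∀ᵐ ω ∂μ,
            Φ (fun v => ω (γ.symm v)) = fun u v => Φ ω (γ.symm u) (γ.symm v)) ∧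
          (∀ᵐ ω ∂μ, IsSchreierDecoration G d (Φ ω))) := by
  obtain ⟨S, hS, hcard, hodd⟩ := exists_finset_card_odd_sum d hd
  refine ⟨ℤ, circulant S, inferInstance, fun v => ?_, fun u v => ?_, fun μ hμ => ⟨?_, ?_⟩⟩
  · have h : (circulant S).neighborSet v = (circulantNbrs S v : Set ℤ) := by
      ext u
      exact circulant_adj_iff hS v u
    rw [h, Set.ncard_coe_finset, card_circulantNbrs hS, hcard]
  · exact ⟨circulantReflect S (u + v), add_sub_cancel_left u v⟩
  · rintro ⟨Φ, hΦ, heq, hbal⟩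
    exact no_fiid_balancedOrientation_circulant hS hodd hμ hΦ heq hbal
  · rintro ⟨Φ, hΦ, heq, hdec⟩
    refine no_fiid_balancedOrientation_circulant hS hodd hμ
      (Φ := fun ω u v => (Φ ω u v).2) ?_ (fun γ => ?_) ?_
    · refine measurable_pi_lambda _ fun u => measurable_pi_lambda _ fun v => ?_
      exact measurable_snd.comp
        ((measurable_pi_apply v).comp ((measurable_pi_apply u).comp hΦ))
    · filter_upwards [heq γ] with ω hω
      simp only [hω]
    · filter_upwards [hdec] with ω hω
      exact hω.isBalancedOrientation
end

section
/- Let d ≥ 2 and let G be a 2d-regular simple graph. If G admits a Schreier decoration (with d colours), then its line graph L(G), which is (4d−2)-regular, admits a Schreier decoration (with 2d−1 colours). -/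
/-! ### The coloured tournament on the labels -/

/-- The coloured tournament on the labels, with colours in `Fin d × Bool` (difference modulo `d`,
copy of the complete digraph; `false` is the copy with loops) and directions in `Bool`
(`true` = out of `x`).  An arc between different bits runs from bit `true` to bit `false`; two
labels with bit `true` are joined upwards in `Fin d`, two labels with bit `false` downwards.
The value at `x = y` is meaningless. -/
def preTournament {d : ℕ} (x y : Fin d × Bool) : (Fin d × Bool) × Bool :=
  let out := if x.2 = y.2 then x.2 == decide (x.1 < y.1) else x.2
  ((if out then y.1 - x.1 else x.1 - y.1, x.2 == y.2), out)

lemma preTournament_swap {d : ℕ} {x y : Fin d × Bool} (h : x ≠ y) :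
    preTournament y x = ((preTournament x y).1, !(preTournament x y).2) := by
  obtain ⟨i, b⟩ := x
  obtain ⟨j, b'⟩ := y
  rcases lt_trichotomy i j with hij | hij | hij
  · cases b <;> cases b' <;> simp [preTournament, hij, hij.not_gt]
  · subst hij
    cases b <;> cases b' <;> simp_all [preTournament]
  · cases b <;> cases b' <;> simp [preTournament, hij, hij.not_gt]

lemma preTournament_fst_ne {d : ℕ} [NeZero d] {x y : Fin d × Bool} (h : x ≠ y) :
    (preTournament x y).1 ≠ (0, true) := by
  obtain ⟨i, b⟩ := x
  obtain ⟨j, b'⟩ := y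
  intro h0
  simp only [preTournament, Prod.mk.injEq, beq_iff_eq] at h0
  obtain ⟨h1, rfl⟩ := h0
  apply h
  split_ifs at h1 <;> rw [sub_eq_zero] at h1 <;> rw [h1]

/-- At the pair of labels with first component `i` there is exactly one arc of each occurring colour
and direction. -/
lemma existsUnique_preTournament {d : ℕ} [NeZero d] (i : Fin d) (c : Fin d × Bool)
    (hc : c ≠ (0, true)) (out : Bool) :
    ∃! p : Bool × (Fin d × Bool), (i, p.1) ≠ p.2 ∧ preTournament (i, p.1) p.2 = (c, out) := by
  obtain ⟨k, copy⟩ := c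
  -- The difference and the direction determine the first component of the other end.
  have key : ∀ j : Fin d, (if out then j - i else i - j) = k ↔ j = if out then i + k else i - k := by
    intro j
    cases out
    · simp only [Bool.false_eq_true, if_false]
      exact ⟨fun h => by rw [← h]; abel, fun h => by rw [h]; abel⟩
    · simp only [if_true]
      exact ⟨fun h => by rw [← h]; abel, fun h => by rw [h]; abel⟩
  have hk := key (if out then i + k else i - k)
  generalize (if out then i + k else i - k) = j at key hk
  simp only [iff_true] at hk
  cases copy
  · refine ⟨(out, (j, !out)), ⟨by simp, by simp [preTournament, hk]⟩, ?_⟩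
    rintro ⟨b, j', b'⟩ ⟨-, h⟩
    simp only [preTournament, Prod.mk.injEq, beq_eq_false_iff_ne] at h
    obtain ⟨⟨h1, h2⟩, h3⟩ := h
    rw [h3, key] at h1
    rw [if_neg h2] at h3
    subst h1 h3
    cases b <;> cases b' <;> simp_all
  · have hij : i ≠ j := by
      rintro rfl
      apply hc
      rw [← hk]
      simp
    refine ⟨(out == decide (i < j), (j, out == decide (i < j))), ⟨by simp [hij], ?_⟩, ?_⟩
    · have : ((out == decide (i < j)) == decide (i < j)) = out := by
        cases out <;> cases decide (i < j) <;> rfl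
      simp [preTournament, this, hk]
    · rintro ⟨b, j', b'⟩ ⟨-, h⟩
      simp only [preTournament, Prod.mk.injEq, beq_iff_eq] at h
      obtain ⟨⟨h1, rfl⟩, h3⟩ := h
      rw [h3, key] at h1
      subst h1
      rw [if_pos rfl] at h3
      subst h3
      cases b <;> cases decide (i < j') <;> rfl

/-- `preTournament` with its occurring colours renamed to `Fin (2 * d - 1)`. -/
lemma exists_tournament (d : ℕ) (hd : d ≠ 0) :
    ∃ T : Fin d × Bool → Fin d × Bool → Fin (2 * d - 1) × Bool,
      (∀ x y, x ≠ y → T y x = ((T x y).1, !(T x y).2)) ∧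
      ∀ (i : Fin d) (q : Fin (2 * d - 1) × Bool),
        ∃! p : Bool × (Fin d × Bool), (i, p.1) ≠ p.2 ∧ T (i, p.1) p.2 = q := by
  have : NeZero d := ⟨hd⟩
  have hcard : Fintype.card {c : Fin d × Bool // c ≠ (0, true)} = 2 * d - 1 := by
    simp [Fintype.card_subtype_compl, mul_comm]
  let e := Fintype.equivFinOfCardEq hcard
  let g : Fin d × Bool → Fin (2 * d - 1) := fun c =>
    if h : c ≠ (0, true) then e ⟨c, h⟩ else e ⟨(0, false), by simp⟩
  have hg : ∀ c, c ≠ (0, true) → ∀ k, g c = k ↔ c = (e.symm k).1 := by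
    intro c hc k
    simp only [g, dif_pos hc, ← Equiv.eq_symm_apply, Subtype.ext_iff]
  refine ⟨fun x y => (g (preTournament x y).1, (preTournament x y).2), ?_, ?_⟩
  · intro x y h
    simp [preTournament_swap h]
  · rintro i ⟨k, out⟩
    refine (existsUnique_congr ?_).mp
      (existsUnique_preTournament i (e.symm k).1 (e.symm k).2 out)
    intro p
    refine and_congr_right fun hp => ?_
    exact Prod.ext_iff.trans
      ((and_congr_left' (hg _ (preTournament_fst_ne hp) k).symm).trans Prod.mk_inj.symm)

/-! ### Labels at a vertex -/

namespace IsSchreierDecoration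

variable {V : Type*} {G : SimpleGraph V} {d : ℕ} {D : V → V → Fin d × Bool}

lemma existsUnique (hD : IsSchreierDecoration G d D) (v : V) (x : Fin d × Bool) :
    ∃! u, G.Adj v u ∧ D v u = x := by
  obtain ⟨i, _ | _⟩ := x
  · exact hD.2.2 v i
  · exact hD.2.1 v i

lemma swap (hD : IsSchreierDecoration G d D) {u v : V} (h : G.Adj u v) :
    D v u = ((D u v).1, !(D u v).2) := by
  rcases huv : D u v with ⟨i, _ | _⟩
  · exact (hD.1 v u h.symm i).mpr huv
  · exact (hD.1 u v h i).mp huv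

/-- A Schreier decoration with `d` colours forces the graph to be `2d`-regular. -/
lemma ncard_neighborSet (hD : IsSchreierDecoration G d D) (v : V) :
    (G.neighborSet v).ncard = 2 * d := by
  have hbij : Function.Bijective fun u : G.neighborSet v => D v u := by
    constructor
    · rintro ⟨u, hu⟩ ⟨w, hw⟩ h
      exact Subtype.ext ((hD.existsUnique v (D v w)).unique ⟨hu, h⟩ ⟨hw, rfl⟩)
    · intro x
      obtain ⟨u, ⟨hu, hx⟩, -⟩ := hD.existsUnique v x
      exact ⟨⟨u, hu⟩, hx⟩
  rw [← Nat.card_coe_set_eq, Nat.card_eq_of_bijective _ hbij]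
  simp [mul_comm]

end IsSchreierDecoration

/-! ### Decorating the line graph -/

/-- The decoration of the line graph obtained by copying `T` to every vertex: the value at two edges
`s(v, u)` and `s(v, w)` is `T` of their labels at `v`.  It is `T (D v u) (D v w)` for an arbitrary
choice of such `v, u, w`, and junk when the edges are equal or disjoint. -/
noncomputable def lineDecoration {V X Y : Type*} [Nonempty Y] (D : V → V → X) (T : X → X → Y)
    (e f : Sym2 V) : Y :=
  Classical.epsilon fun q => ∃ v u w, e = s(v, u) ∧ f = s(v, w) ∧ q = T (D v u) (D v w)

/-- The value does not depend on the choice, since distinct edges share at most one vertex. -/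
lemma lineDecoration_mk {V X Y : Type*} [Nonempty Y] (D : V → V → X) (T : X → X → Y)
    {v u w : V} (huw : u ≠ w) :
    lineDecoration D T s(v, u) s(v, w) = T (D v u) (D v w) := by
  have hex : ∃ q, ∃ v' u' w', s(v, u) = s(v', u') ∧ s(v, w) = s(v', w') ∧
      q = T (D v' u') (D v' w') := ⟨_, v, u, w, rfl, rfl, rfl⟩
  obtain ⟨v', u', w', h1, h2, h3⟩ := Classical.epsilon_spec hex
  refine Eq.trans h3 ?_
  rw [Sym2.eq_iff] at h1 h2
  obtain ⟨rfl, rfl⟩ | ⟨rfl, rfl⟩ := h1 <;> obtain ⟨h4, h5⟩ | ⟨h4, h5⟩ := h2 <;> simp_all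

/-- Adjacency in the line graph with the two edges written from their common vertex. -/
lemma lineGraph_adj_iff_mk {V : Type*} {G : SimpleGraph V} {e f : G.edgeSet} :
    G.lineGraph.Adj e f ↔
      ∃ v u w, u ≠ w ∧ G.Adj v u ∧ G.Adj v w ∧ (e : Sym2 V) = s(v, u) ∧ (f : Sym2 V) = s(v, w) := by
  rw [SimpleGraph.lineGraph_adj_iff_exists]
  constructor
  · rintro ⟨hne, v, ⟨u, hu⟩, ⟨w, hw⟩⟩
    refine ⟨v, u, w, ?_, ?_, ?_, hu, hw⟩
    · rintro rfl
      exact hne (Subtype.ext (hu.trans hw.symm))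
    · have := e.2
      rwa [hu] at this
    · have := f.2
      rwa [hw] at this
  · rintro ⟨v, u, w, hne, -, -, hu, hw⟩
    refine ⟨?_, v, by simp [hu], by simp [hw]⟩
    rintro rfl
    exact hne (Sym2.congr_right.mp (hu.symm.trans hw))

/-- At each edge of `G`, every colour and direction is taken exactly once. -/
lemma existsUnique_lineDecoration {V Y : Type*} [Nonempty Y] {G : SimpleGraph V} {d : ℕ}
    {D : V → V → Fin d × Bool} (hD : IsSchreierDecoration G d D)
    {T : Fin d × Bool → Fin d × Bool → Y}
    (hT : ∀ (i : Fin d) (q : Y),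
        ∃! p : Bool × (Fin d × Bool), (i, p.1) ≠ p.2 ∧ T (i, p.1) p.2 = q)
    (e : G.edgeSet) (q : Y) :
    ∃! f : G.edgeSet, G.lineGraph.Adj e f ∧ lineDecoration D T e f = q := by
  -- The two labels of `e` are `(i, true)` and `(i, false)`, one at each end.
  obtain ⟨i, hi⟩ : ∃ i, ∀ v u, (e : Sym2 V) = s(v, u) → (D v u).1 = i := by
    obtain ⟨e, he⟩ := e
    induction e using Sym2.ind with
    | _ a b =>
      refine ⟨(D a b).1, fun v u h => ?_⟩
      obtain ⟨rfl, rfl⟩ | ⟨rfl, rfl⟩ := Sym2.eq_iff.mp h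
      · rfl
      · rw [hD.swap he]
  have hend : ∀ b, ∃ v u, (e : Sym2 V) = s(v, u) ∧ D v u = (i, b) := by
    obtain ⟨e, he⟩ := e
    induction e using Sym2.ind with
    | _ a c =>
      intro b
      have h1 := hi a c rfl
      by_cases hb : (D a c).2 = b
      · exact ⟨a, c, rfl, Prod.ext h1 hb⟩
      · refine ⟨c, a, Sym2.eq_swap, ?_⟩
        rw [hD.swap he, h1, Bool.not_eq.mpr hb]
  have hends : ∀ v u v' u', (e : Sym2 V) = s(v, u) → (e : Sym2 V) = s(v', u') →
      D v u = D v' u' → v = v' ∧ u = u' := by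
    intro v u v' u' h h' hl
    obtain h1 | ⟨rfl, rfl⟩ := Sym2.eq_iff.mp (h.symm.trans h')
    · exact h1
    · have he := e.2
      rw [h] at he
      rw [hD.swap he] at hl
      have := congrArg Prod.snd hl
      simp at this
  obtain ⟨⟨b, y⟩, ⟨hne, hy⟩, huniq⟩ := hT i q
  obtain ⟨v, u, he, hvu⟩ := hend b
  obtain ⟨w, ⟨hvw, hw⟩, hwuniq⟩ := hD.existsUnique v y
  have huw : u ≠ w := by
    rintro rfl
    exact hne (hvu.symm.trans hw)
  have hadj : G.Adj v u := by
    have := e.2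
    rwa [he] at this
  refine ⟨⟨s(v, w), hvw⟩, ⟨lineGraph_adj_iff_mk.mpr ⟨v, u, w, huw, hadj, hvw, he, rfl⟩, ?_⟩, ?_⟩
  · change lineDecoration D T e s(v, w) = q
    rw [he, lineDecoration_mk D T huw, hvu, hw]
    exact hy
  · rintro f ⟨hf, hq⟩
    obtain ⟨v', u', w', hne', hu', hw', he', hf'⟩ := lineGraph_adj_iff_mk.mp hf
    rw [he', hf', lineDecoration_mk D T hne'] at hq
    have hl : D v' u' = (i, (D v' u').2) := Prod.ext (hi v' u' he') rfl
    have hp := huniq ((D v' u').2, D v' w') ⟨?_, by rw [← hl]; exact hq⟩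
    · rw [Prod.mk.injEq] at hp
      obtain ⟨rfl, rfl⟩ := hends v' u' v u he' he (by rw [hl, hvu, hp.1])
      obtain rfl := hwuniq w' ⟨hw', hp.2⟩
      exact Subtype.ext hf'
    · rw [← hl]
      exact fun h => hne' ((hD.existsUnique v' _).unique ⟨hu', h⟩ ⟨hw', rfl⟩)

/-- If a `2d`-regular simple graph `G` (`d ≥ 2`) admits a Schreier
decoration with `d` colours, then its line graph `L(G)`, which is `(4d-2)`-regular, admits
a Schreier decoration with `2d-1` colours. -/
theorem lineGraph_schreier_of_schreier {V : Type*} (d : ℕ) (hd : 2 ≤ d)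
    (G : SimpleGraph V)
    (hreg : ∀ v : V, (G.neighborSet v).ncard = 2 * d)
    (hSch : ∃ D : V → V → Fin d × Bool, IsSchreierDecoration G d D) :
    (∀ e : G.edgeSet, ((G.lineGraph).neighborSet e).ncard = 4 * d - 2) ∧
    (∃ D' : G.edgeSet → G.edgeSet → Fin (2 * d - 1) × Bool,
      IsSchreierDecoration G.lineGraph (2 * d - 1) D') := by
  have hd0 : d ≠ 0 := by omega
  obtain ⟨D, hD⟩ := hSch
  obtain ⟨T, hTswap, hT⟩ := exists_tournament d hd0
  have : Nonempty (Fin (2 * d - 1) × Bool) := ⟨(⟨0, by omega⟩, true)⟩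
  have hmain : IsSchreierDecoration G.lineGraph (2 * d - 1)
      (fun e f => lineDecoration D T (e : Sym2 V) (f : Sym2 V)) := by
    refine ⟨?_, fun e c => existsUnique_lineDecoration hD hT e (c, true),
      fun e c => existsUnique_lineDecoration hD hT e (c, false)⟩
    intro e f hef c
    obtain ⟨v, u, w, hne, hu, hw, he, hf⟩ := lineGraph_adj_iff_mk.mp hef
    have hlab : D v u ≠ D v w :=
      fun h => hne ((hD.existsUnique v _).unique ⟨hu, h⟩ ⟨hw, rfl⟩)
    simp only [he, hf, lineDecoration_mk D T hne, lineDecoration_mk D T hne.symm,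
      hTswap _ _ hlab, Prod.ext_iff, Bool.not_eq_false']
  refine ⟨fun e => ?_, _, hmain⟩
  rw [hmain.ncard_neighborSet e]
  omega
end
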